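/- arXiv:2506.08374 — 3 statements merged into one kernel-verified Lean document; each statement's English description precedes it below -/
import Mathlib

section
/- Let τ > 0 and z, u ∈ ℝ^m with z_i ≥ 0 for all i. Then z ∈ Prox_{τg}(z + τu) holds if and only if for every i ∈ {1,…,m} the pair (u_i, z_i) lies in Ω₁ ∪ Ω₂, where Ω₁ := {0} × [√(2μτ), ∞) and Ω₂ := (−∞, √(2μ/τ)] × {0}. -/
open scoped RealInnerProductSpace
open Filter Topology

/- Number of nonzero coordinates of `z` (the "ℓ₀ norm"). -/
open Classical in
noncomputable def zeroNorm {m : ℕ} (z : EuclideanSpace ℝ (Fin m)) : ℕ :=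
  (Finset.univ.filter fun i => z i ≠ 0).card

/- `g(z) = μ‖z‖₀` if `z ≥ 0` componentwise, `+∞` otherwise. -/
open Classical in
noncomputable def gfun {m : ℕ} (μ : ℝ) (z : EuclideanSpace ℝ (Fin m)) : EReal :=
  if ∀ i, 0 ≤ z i then ((μ * zeroNorm z : ℝ) : EReal) else ⊤

/- The proximal set `Prox_{τ g}(u)`: minimizers of `g(z) + (1/(2τ))‖z - u‖²`. -/
noncomputable def proxSet {m : ℕ} (μ τ : ℝ) (u : EuclideanSpace ℝ (Fin m)) :
    Set (EuclideanSpace ℝ (Fin m)) :=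
  {z | ∀ w, gfun μ z + ((1 / (2 * τ) * ‖z - u‖ ^ 2 : ℝ) : EReal)
        ≤ gfun μ w + ((1 / (2 * τ) * ‖w - u‖ ^ 2 : ℝ) : EReal)}

open Classical in
noncomputable def hsc (μ τ a t : ℝ) : ℝ :=
  μ * (if t ≠ 0 then 1 else 0) + 1 / (2 * τ) * (t - a) ^ 2

theorem obj_eq {m : ℕ} (μ τ : ℝ) (v w : EuclideanSpace ℝ (Fin m)) (hw : ∀ i, 0 ≤ w i) :
    gfun μ w + ((1 / (2 * τ) * ‖w - v‖ ^ 2 : ℝ) : EReal)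
      = ((∑ i, hsc μ τ (v i) (w i) : ℝ) : EReal) := by
  unfold gfun
  rw [if_pos hw, ← EReal.coe_add]
  congr 1
  unfold hsc zeroNorm
  rw [Finset.sum_add_distrib, ← Finset.mul_sum, ← Finset.mul_sum, EuclideanSpace.norm_sq_eq]
  rw [Finset.sum_boole]
  simp [Real.norm_eq_abs, sq_abs]

theorem scalar_iff (μ τ : ℝ) (hμ : 0 < μ) (hτ : 0 < τ) (z u : ℝ) (hz : 0 ≤ z) :
    (∀ t, 0 ≤ t → hsc μ τ (z + τ * u) z ≤ hsc μ τ (z + τ * u) t) ↔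
      ((u = 0 ∧ Real.sqrt (2 * μ * τ) ≤ z) ∨ (u ≤ Real.sqrt (2 * μ / τ) ∧ z = 0)) := by
  have key : ∀ c d p q : ℝ, (μ * c + 1 / (2 * τ) * p ≤ μ * d + 1 / (2 * τ) * q) ↔
      2 * μ * τ * c + p ≤ 2 * μ * τ * d + q := by
    intro c d p q
    have e : ∀ c p : ℝ, 2 * μ * τ * c + p = (2 * τ) * (μ * c + 1 / (2 * τ) * p) := by
      intro c p; field_simp
    rw [e, e]
    exact (mul_le_mul_iff_right₀ (by positivity)).symm
  have hp : 0 < 2 * μ * τ := by positivity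
  unfold hsc
  simp only [key]
  rcases eq_or_lt_of_le hz with h0 | h0
  · subst h0
    have hs : u ≤ Real.sqrt (2 * μ / τ) ↔ (0 < u → τ ^ 2 * u ^ 2 ≤ 2 * μ * τ) := by
      have e : τ ^ 2 * u ^ 2 ≤ 2 * μ * τ ↔ u ^ 2 ≤ 2 * μ / τ := by
        rw [le_div_iff₀ hτ]
        constructor <;> intro h <;> nlinarith
      rw [e]
      constructor
      · intro h hu
        exact (Real.le_sqrt' hu).1 h
      · intro h
        rcases lt_or_ge 0 u with hu | hu
        · exact (Real.le_sqrt' hu).2 (h hu)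
        · exact hu.trans (Real.sqrt_nonneg _)
    constructor
    · intro h
      right
      refine ⟨hs.2 fun hu => ?_, rfl⟩
      have hτu : 0 < τ * u := by positivity
      have := h (τ * u) hτu.le
      simp [hτu.ne'] at this
      rcases this with this
      nlinarith
    · rintro (⟨hu, h⟩ | ⟨h, -⟩) t ht
      · exact absurd h (not_le.2 (Real.sqrt_pos.2 hp))
      · rw [hs] at h
        by_cases h0 : t = 0
        · simp [h0]
        · simp only [ne_eq, h0, not_false_eq_true, if_true, not_true, if_false]
          rcases lt_or_ge 0 u with hu | hu
          · nlinarith [h hu, sq_nonneg (t - τ * u)]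
          · nlinarith [mul_nonneg ht (mul_nonneg hτ.le (neg_nonneg.2 hu)), sq_nonneg t]
  · have hne := h0.ne'
    simp only [ne_eq, hne, not_false_eq_true, if_true, and_false, or_false]
    constructor
    · intro h
      have hu : u = 0 := by
        by_contra hu
        have hw : 0 < τ * |u| := by positivity
        -- step towards z + τ u
        rcases lt_or_gt_of_ne hu with hneg | hpos
        · have hd : 0 < min (z / 2) (-(τ * u)) := lt_min (by linarith) (by nlinarith)
          set d := min (z / 2) (-(τ * u))
          have h1 : d ≤ z / 2 := min_le_left _ _
          have h2 : d ≤ -(τ * u) := min_le_right _ _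
          have h3 : z - d ≠ 0 := by linarith
          have := h (z - d) (by linarith)
          simp only [h3, not_false_eq_true, if_true] at this
          nlinarith
        · have hd : 0 < τ * u := by positivity
          have h3 : z + τ * u ≠ 0 := by positivity
          have := h (z + τ * u) (by positivity)
          simp only [h3, not_false_eq_true, if_true] at this
          nlinarith
      refine ⟨hu, ?_⟩
      have := h 0 le_rfl
      subst hu
      simp at this
      rw [Real.sqrt_le_left h0.le]
      linarith
    · rintro ⟨rfl, h⟩ t ht
      rw [Real.sqrt_le_left h0.le] at h
      by_cases ht0 : t = 0
      · simp [ht0]; linarith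
      · simp [ht0]; positivity

/-- `z ∈ Prox_{τg}(z + τu)` iff each pair `(uᵢ, zᵢ)` lies in
`Ω₁ ∪ Ω₂` with `Ω₁ = {0} × [√(2μτ), ∞)` and `Ω₂ = (−∞, √(2μ/τ)] × {0}`. -/
theorem stmt2 {m : ℕ} (μ τ : ℝ) (hμ : 0 < μ) (hτ : 0 < τ)
    (z u : EuclideanSpace ℝ (Fin m)) (hz : ∀ i, 0 ≤ z i) :
    z ∈ proxSet μ τ (z + τ • u) ↔
      ∀ i : Fin m,
        (u i = 0 ∧ Real.sqrt (2 * μ * τ) ≤ z i) ∨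
        (u i ≤ Real.sqrt (2 * μ / τ) ∧ z i = 0) := by
  have e1 : z ∈ proxSet μ τ (z + τ • u) ↔ ∀ w : EuclideanSpace ℝ (Fin m), (∀ i, 0 ≤ w i) →
      ∑ i, hsc μ τ (z i + τ * u i) (z i) ≤ ∑ i, hsc μ τ (z i + τ * u i) (w i) := by
    unfold proxSet
    rw [Set.mem_setOf_eq]
    refine forall_congr' fun w => ?_
    by_cases hw : ∀ i, 0 ≤ w i
    · rw [obj_eq μ τ _ z hz, obj_eq μ τ _ w hw, EReal.coe_le_coe_iff]
      simp [hw]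
    · have : gfun μ w = ⊤ := by unfold gfun; rw [if_neg hw]
      rw [this, EReal.top_add_coe]
      simp [hw]
  rw [e1]
  simp only [← fun i => scalar_iff μ τ hμ hτ (z i) (u i) (hz i)]
  constructor
  · intro h i t ht
    have := h (WithLp.toLp 2 (Function.update (fun j => z j) i t)) (by
      intro j
      by_cases hj : j = i
      · subst hj; simpa using ht
      · simpa [hj] using hz j)
    rw [← Finset.add_sum_erase _ _ (Finset.mem_univ i),
      ← Finset.add_sum_erase Finset.univ (fun j => hsc μ τ (z j + τ * u j) ((WithLp.toLp 2 (Function.update (fun j => z j) i t) : EuclideanSpace ℝ (Fin m)) j)) (Finset.mem_univ i)] at this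
    have e : ∑ j ∈ Finset.univ.erase i, hsc μ τ (z j + τ * u j) ((WithLp.toLp 2 (Function.update (fun j => z j) i t) : EuclideanSpace ℝ (Fin m)) j) = ∑ j ∈ Finset.univ.erase i, hsc μ τ (z j + τ * u j) (z j) := by
      refine Finset.sum_congr rfl fun j hj => ?_
      simp [Finset.ne_of_mem_erase hj]
    rw [e] at this
    simp at this
    linarith
  · intro h w hw
    exact Finset.sum_le_sum fun i _ => h i (w i) (hw i)
end

section
/- Let h : ℝ^m → ℝ be differentiable and F := h + g. If z* is a P-stationary point of min F (i.e. z* ∈ Prox_{τg}(z* − τ∇h(z*)) for some τ > 0), then z* is a KKT point (z* ≥ 0 componentwise and ∇h(z*)_i = 0 for every i with z*_i > 0). Conversely, if z* is a KKT point, then z* ∈ Prox_{τg}(z* − τ∇h(z*)) for every τ with 0 < τ < min{τ₁(z*), τ₂(−∇h(z*))}, where τ₁(z) := +∞ if z = 0 and min{ z_i²/(2μ) : z_i > 0 } otherwise, and τ₂(u) := +∞ if u ≤ 0 componentwise and min{ 2μ/u_i² : u_i > 0 } otherwise. -/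
open scoped RealInnerProductSpace
open Filter Topology

open Classical in
lemma aux_obj {m : ℕ} (μ τ : ℝ) (u w : EuclideanSpace ℝ (Fin m)) (hw : ∀ i, 0 ≤ w i) :
    gfun μ w + ((1 / (2 * τ) * ‖w - u‖ ^ 2 : ℝ) : EReal)
      = ((∑ i, ((if w i ≠ 0 then μ else 0) + 1 / (2 * τ) * (w i - u i) ^ 2) : ℝ) : EReal) := by
  unfold gfun zeroNorm
  rw [if_pos hw, ← EReal.coe_add, EuclideanSpace.norm_sq_eq]
  congr 1
  rw [Finset.sum_add_distrib, ← Finset.mul_sum, ← Finset.sum_filter, Finset.sum_const]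
  simp [mul_comm]

lemma aux_top {m : ℕ} (μ τ : ℝ) (u w : EuclideanSpace ℝ (Fin m)) (hw : ¬ ∀ i, 0 ≤ w i) :
    gfun μ w + ((1 / (2 * τ) * ‖w - u‖ ^ 2 : ℝ) : EReal) = ⊤ := by
  unfold gfun
  rw [if_neg hw, EReal.top_add_coe]

/-- a P-stationary point of `min h + g` is a KKT point
(`z* ≥ 0` and `∇h(z*)ᵢ = 0` whenever `z*ᵢ > 0`); conversely a KKT point is
P-stationary for every `0 < τ < min{τ₁(z*), τ₂(−∇h(z*))}`, the bound being
expressed coordinatewise. -/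
theorem stmt8 {m : ℕ} (μ : ℝ) (hμ : 0 < μ)
    (h : EuclideanSpace ℝ (Fin m) → ℝ)
    (h' : EuclideanSpace ℝ (Fin m) → EuclideanSpace ℝ (Fin m))
    (hdiff : ∀ z, HasGradientAt h (h' z) z)
    (zstar : EuclideanSpace ℝ (Fin m)) :
    ((∃ τ : ℝ, 0 < τ ∧ zstar ∈ proxSet μ τ (zstar - τ • h' zstar)) →
      (∀ i, 0 ≤ zstar i) ∧ (∀ i, 0 < zstar i → h' zstar i = 0)) ∧
    (((∀ i, 0 ≤ zstar i) ∧ (∀ i, 0 < zstar i → h' zstar i = 0)) →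
      ∀ τ : ℝ, 0 < τ →
        (∀ i, 0 < zstar i → τ < (zstar i) ^ 2 / (2 * μ)) →
        (∀ i, 0 < (-(h' zstar)) i → τ < 2 * μ / ((-(h' zstar)) i) ^ 2) →
        zstar ∈ proxSet μ τ (zstar - τ • h' zstar)) := by
  refine ⟨?_, ?_⟩
  · rintro ⟨τ, hτ, hz⟩
    have hz' : ∀ w, _ := hz
    have hnn : ∀ i, 0 ≤ zstar i := by
      by_contra hc
      have h0 := hz' 0
      rw [aux_top _ _ _ _ hc, aux_obj _ _ _ _ (by simp)] at h0
      exact absurd h0 (not_le.mpr (EReal.coe_lt_top _))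
    refine ⟨hnn, fun i hi => ?_⟩
    have key : ∀ c : ℝ, 0 < c → (τ * h' zstar i) ^ 2 ≤ (c - zstar i + τ * h' zstar i) ^ 2 := by
      intro c hc
      have h1 := hz' (WithLp.toLp 2 (Function.update (fun j => zstar j) i c))
      rw [aux_obj _ _ _ _ hnn, aux_obj, EReal.coe_le_coe_iff,
        ← Finset.add_sum_erase _ _ (Finset.mem_univ i),
        ← Finset.add_sum_erase (a := i) _ _ (Finset.mem_univ i)] at h1
      · have e : ∀ a b c d : ℝ, a + b ≤ c + d → b = d → a ≤ c := by
          intros; linarith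
        have h2 := e _ _ _ _ h1 (by
          apply Finset.sum_congr rfl
          intro j hj
          have := Finset.ne_of_mem_erase hj
          simp [Function.update_of_ne this])
        simp only [Function.update_self, PiLp.sub_apply, PiLp.smul_apply, smul_eq_mul] at h2
        rw [if_pos hi.ne', if_pos hc.ne'] at h2
        have h3 := le_of_mul_le_mul_left (le_of_add_le_add_left h2) (by positivity)
        nlinarith [h3]
      · intro j
        by_cases hj : j = i
        · subst hj; simpa using hc.le
        · simpa [Function.update_of_ne hj] using hnn j
    by_contra hd
    rcases lt_or_gt_of_ne hd with hd | hd
    · have hp : τ * h' zstar i < 0 := mul_neg_of_pos_of_neg hτ hd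
      have := key (zstar i - τ * h' zstar i) (by linarith)
      nlinarith
    · have hp : 0 < τ * h' zstar i := mul_pos hτ hd
      have e1 := min_le_left (τ * h' zstar i) (zstar i / 2)
      have e2 := min_le_right (τ * h' zstar i) (zstar i / 2)
      have e3 : 0 < min (τ * h' zstar i) (zstar i / 2) := lt_min hp (by linarith)
      have := key (zstar i - min (τ * h' zstar i) (zstar i / 2)) (by linarith)
      nlinarith
  · rintro ⟨hnn, hk⟩ τ hτ h1 h2 w
    by_cases hw : ∀ i, 0 ≤ w i
    · rw [aux_obj _ _ _ _ hnn, aux_obj _ _ _ _ hw, EReal.coe_le_coe_iff]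
      apply Finset.sum_le_sum
      intro i _
      simp only [PiLp.sub_apply, PiLp.smul_apply, smul_eq_mul]
      have hwi := hw i
      have h2i := h2 i
      simp only [PiLp.neg_apply] at h2i
      rcases (hnn i).eq_or_lt with hz | hz
      · rw [← hz]
        by_cases hw0 : w i = 0
        · simp [hw0]
        · rw [if_neg (by simp), if_pos hw0]
          generalize h' zstar i = d at *
          generalize w i = x at *
          have q : 1 / (2 * τ) * (x - (0 - τ * d)) ^ 2
              = 1 / (2 * τ) * x ^ 2 + x * d + 1 / (2 * τ) * (0 - (0 - τ * d)) ^ 2 := by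
            field_simp; ring
          have q0 : 0 ≤ 1 / (2 * τ) * x ^ 2 := by positivity
          rcases le_or_gt 0 d with hd | hd
          · rw [q]; nlinarith [mul_nonneg hwi hd]
          · have h3 := h2i (by linarith)
            rw [lt_div_iff₀ (by nlinarith)] at h3
            have q1 : 1 / (2 * τ) * (0 - (0 - τ * d)) ^ 2 = τ * (-d) ^ 2 / 2 := by
              field_simp; ring
            have : 0 ≤ 1 / (2 * τ) * (x - (0 - τ * d)) ^ 2 := by positivity
            rw [q1]; linarith
      · have h3 := h1 i hz
        rw [hk i hz, if_pos hz.ne']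
        rw [lt_div_iff₀ (by positivity)] at h3
        by_cases hw0 : w i = 0
        · rw [if_neg (by simpa using hw0), hw0]
          have : μ ≤ 1 / (2 * τ) * zstar i ^ 2 := by
            rw [one_div_mul_eq_div, le_div_iff₀ (by positivity)]; linarith
          simp only [mul_zero, sub_zero, sub_self, zero_sub, neg_sq]
          linarith
        · rw [if_pos hw0]
          have : 0 ≤ 1 / (2 * τ) * (w i - (zstar i - τ * 0)) ^ 2 := by positivity
          simp only [mul_zero, sub_zero, sub_self] at *
          linarith
    · rw [aux_top _ _ _ _ hw]; exact le_top
end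

section
/- Let h : ℝ^m → ℝ be differentiable with ℓ_h-Lipschitz gradient (ℓ_h > 0), F := h + g, and let 0 < τ < 1/ℓ_h. If v ∈ Prox_{τg}(z − τ∇h(z)) for some z ∈ ℝ^m, then F(z) − F(v) ≥ (1/(2τ) − ℓ_h/2)‖v − z‖² (as an inequality in ℝ ∪ {+∞}). -/
open scoped RealInnerProductSpace
open Filter Topology

theorem descent_aux {m : ℕ} (ℓh : ℝ)
    (h : EuclideanSpace ℝ (Fin m) → ℝ)
    (h' : EuclideanSpace ℝ (Fin m) → EuclideanSpace ℝ (Fin m))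
    (hdiff : ∀ z, HasGradientAt h (h' z) z)
    (hlip : ∀ x y, ‖h' x - h' y‖ ≤ ℓh * ‖x - y‖)
    (z d : EuclideanSpace ℝ (Fin m)) :
    h (z + d) ≤ h z + inner ℝ (h' z) d + ℓh / 2 * ‖d‖ ^ 2 := by
  have hφ : ∀ t : ℝ, HasDerivAt (fun t : ℝ => h (z + t • d)) (inner ℝ (h' (z + t • d)) d) t := by
    intro t
    have h1 : HasDerivAt (fun t : ℝ => z + t • d) d t := by
      simpa using ((hasDerivAt_id t).smul_const d).const_add z
    have h2 := (hdiff (z + t • d)).hasFDerivAt.comp_hasDerivAt t h1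
    rw [InnerProductSpace.toDual_apply_apply] at h2
    exact h2
  have hB : ∀ t : ℝ, HasDerivAt
      (fun t : ℝ => h z + t * inner ℝ (h' z) d + ℓh / 2 * ‖d‖ ^ 2 * t ^ 2)
      (inner ℝ (h' z) d + ℓh * ‖d‖ ^ 2 * t) t := by
    intro t
    have h1 := (((hasDerivAt_id t).mul_const (inner ℝ (h' z) d)).const_add (h z)).add
      (((hasDerivAt_id t).pow 2).const_mul (ℓh / 2 * ‖d‖ ^ 2))
    refine h1.congr_deriv ?_
    simp
    ring
  have key := image_le_of_deriv_right_le_deriv_boundary (a := 0) (b := 1)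
    (f := fun t : ℝ => h (z + t • d))
    (fun t _ => (hφ t).continuousAt.continuousWithinAt)
    (fun t _ => (hφ t).hasDerivWithinAt)
    (B := fun t : ℝ => h z + t * inner ℝ (h' z) d + ℓh / 2 * ‖d‖ ^ 2 * t ^ 2)
    (by simp)
    (fun t _ => (hB t).continuousAt.continuousWithinAt)
    (fun t _ => (hB t).hasDerivWithinAt)
    (by
      intro t ht
      have h1 : inner ℝ (h' (z + t • d) - h' z) d ≤ ‖h' (z + t • d) - h' z‖ * ‖d‖ :=
        real_inner_le_norm _ _
      have h2 := hlip (z + t • d) z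
      rw [add_sub_cancel_left, norm_smul, Real.norm_of_nonneg ht.1] at h2
      have h3 := mul_le_mul_of_nonneg_right h2 (norm_nonneg d)
      rw [inner_sub_left] at h1
      nlinarith)
    (x := 1) (by simp)
  simpa using key

/-- sufficient descent of the proximal gradient step,
`F(z) − F(v) ≥ (1/(2τ) − ℓ_h/2)‖v − z‖²` in `ℝ ∪ {+∞}`. -/
theorem stmt14 {m : ℕ} (μ ℓh τ : ℝ) (hμ : 0 < μ) (hℓ : 0 < ℓh)
    (hτ0 : 0 < τ) (hτ : τ < 1 / ℓh)
    (h : EuclideanSpace ℝ (Fin m) → ℝ)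
    (h' : EuclideanSpace ℝ (Fin m) → EuclideanSpace ℝ (Fin m))
    (hdiff : ∀ z, HasGradientAt h (h' z) z)
    (hlip : ∀ x y, ‖h' x - h' y‖ ≤ ℓh * ‖x - y‖)
    (z v : EuclideanSpace ℝ (Fin m))
    (hv : v ∈ proxSet μ τ (z - τ • h' z)) :
    (((1 / (2 * τ) - ℓh / 2) * ‖v - z‖ ^ 2 : ℝ) : EReal) ≤
      ((h z : EReal) + gfun μ z) - ((h v : EReal) + gfun μ v) := by
  have hd := descent_aux ℓh h h' hdiff hlip z (v - z)
  rw [add_sub_cancel] at hd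
  have hn : ∀ w, ‖w - (z - τ • h' z)‖ ^ 2
      = ‖w - z‖ ^ 2 + 2 * τ * inner ℝ (h' z) (w - z) + τ ^ 2 * ‖h' z‖ ^ 2 := by
    intro w
    have : w - (z - τ • h' z) = (w - z) + τ • h' z := by abel
    rw [this, norm_add_sq_real, inner_smul_right, norm_smul, mul_pow, Real.norm_eq_abs, sq_abs,
      real_inner_comm]
    ring
  have hfin : ∀ i, 0 ≤ v i := by
    by_contra hc
    have h0 := hv 0
    simp only [gfun, if_neg hc] at h0
    rw [if_pos (by intro i; simp), EReal.top_add_coe, ← EReal.coe_add] at h0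
    exact absurd h0 (by simp [-EReal.coe_add])
  have hz := hv z
  simp only [gfun, if_pos hfin] at hz ⊢
  by_cases hc : ∀ i, 0 ≤ z i
  · simp only [if_pos hc] at hz ⊢
    rw [hn, hn] at hz
    norm_cast at hz ⊢
    have e : ∀ a b c : ℝ, 1 / (2 * τ) * (a + 2 * τ * b + c)
        = 1 / (2 * τ) * a + b + 1 / (2 * τ) * c := by
      intro a b c
      field_simp
    rw [e, e] at hz
    simp only [sub_self, norm_zero, inner_zero_right] at hz
    nlinarith
  · simp only [if_neg hc]
    rw [EReal.coe_add_top, ← EReal.coe_add, EReal.top_sub_coe]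
    exact le_top
end
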